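/- For every (s,v) ∈ Λ̄₂, the rate function I(s,v) admits the Fourier-series representation I(s,v) = (6/π) ∑_{n=1}^∞ (−1)^{n−1} n^{−2} sin(nπ/3) cos(2(1−s)nπ/3) + (5/π) ∑_{n=1}^∞ n^{−2} sin(nπ/3) − (6/π) ∑_{n=1}^∞ n^{−2} sin(nπ/3) cos((1−s+v)nπ/3) − (3/π) ∑_{n=1}^∞ n^{−2} sin(nπ/3) cos((1−s−v)nπ/3), where I(s,v) = 3∫_0^{(1−s−v)/6} log[sin(π(φ+1/6))/sin(π(1/6−φ))] dφ + 6∫_0^{(1−s+v)/6} log[sin(π(φ+1/6))/sin(π(1/6−φ))] dφ + 6∫_0^{(1−s)/3} log[cos(π(φ+1/6))/cos(π(1/6−φ))] dφ. -/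

import Mathlib

open scoped Real

/-- The scaled region `Λ̄₂`. -/
def LambdaBar2 : Set (ℝ × ℝ) :=
  {p | (0 ≤ p.1 ∧ p.1 ≤ 1 ∧ -p.1 ≤ p.2 ∧ p.2 ≤ p.1) ∨
       (1 < p.1 ∧ p.1 ≤ 2 ∧ -(2 - p.1) ≤ p.2 ∧ p.2 ≤ 2 - p.1)}

/-- The rate function `I(s,v)` in its integral representation. -/
noncomputable def rateI (s v : ℝ) : ℝ :=
  3 * (∫ φ in (0 : ℝ)..((1 - s - v) / 6),
        Real.log (Real.sin (π * (φ + 1 / 6)) / Real.sin (π * (1 / 6 - φ)))) +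
  6 * (∫ φ in (0 : ℝ)..((1 - s + v) / 6),
        Real.log (Real.sin (π * (φ + 1 / 6)) / Real.sin (π * (1 / 6 - φ)))) +
  6 * (∫ φ in (0 : ℝ)..((1 - s) / 3),
        Real.log (Real.cos (π * (φ + 1 / 6)) / Real.cos (π * (1 / 6 - φ))))

open MeasureTheory Filter Topology

lemma aux_ae_sin (c d : ℝ) (hc : c ≠ 0) : ∀ᵐ t : ℝ, Real.sin (c * t + d) ≠ 0 := by
  have hsub : {t : ℝ | Real.sin (c * t + d) = 0} ⊆ Set.range (fun n : ℤ => ((n : ℝ) * π - d) / c) := by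
    intro t ht
    obtain ⟨n, hn⟩ := Real.sin_eq_zero_iff.1 ht
    refine ⟨n, ?_⟩
    simp only
    rw [hn]
    field_simp
    ring
  have h0 : volume {t : ℝ | Real.sin (c * t + d) = 0} = 0 :=
    ((Set.countable_range _).mono hsub).measure_zero _
  rw [ae_iff]
  simpa using h0

noncomputable def auxCl (a : ℝ) : ℝ := ∑' n : ℕ, 1 / ((n : ℝ) + 1) ^ 2 * Real.sin (((n : ℝ) + 1) * a)

lemma aux_summable : Summable (fun n : ℕ => 1 / ((n : ℝ) + 1) ^ 2) := by
  have := (summable_nat_add_iff 1).2 (Real.summable_one_div_nat_pow (p := 2) |>.2 one_lt_two)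
  simpa using this

lemma aux_summable_mul (f : ℕ → ℝ) (hf : ∀ n, |f n| ≤ 1) :
    Summable (fun n : ℕ => 1 / ((n : ℝ) + 1) ^ 2 * f n) := by
  refine Summable.of_norm_bounded aux_summable (fun n => ?_)
  rw [norm_mul, Real.norm_eq_abs, Real.norm_eq_abs, abs_of_nonneg (by positivity)]
  exact mul_le_of_le_one_right (by positivity) (hf n)

noncomputable def auxG (r t : ℝ) : ℝ := Real.log ‖(1 : ℂ) - r * Complex.exp (Complex.I * t)‖

lemma aux_norm (r t : ℝ) : ‖(r : ℂ) * Complex.exp (Complex.I * t)‖ = |r| := by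
  rw [norm_mul, mul_comm, mul_comm Complex.I, Complex.norm_exp_ofReal_mul_I]; simp

lemma aux_hasSum (r t : ℝ) (h0 : 0 ≤ r) (h1 : r < 1) :
    HasSum (fun n : ℕ => -(r ^ (n + 1) / ((n : ℝ) + 1) * Real.cos (((n : ℝ) + 1) * t))) (auxG r t) := by
  have hz : ‖(r : ℂ) * Complex.exp (Complex.I * t)‖ < 1 := by
    rw [aux_norm, abs_of_nonneg h0]; exact h1
  have h := (Complex.hasSum_re (Complex.hasSum_taylorSeries_neg_log' hz)).neg
  rw [Complex.neg_re, neg_neg, Complex.log_re] at h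
  refine h.congr_fun ?_ |> fun h => h
  intro n
  congr 1
  have : ((r : ℂ) * Complex.exp (Complex.I * t)) ^ (n + 1) / ((n : ℂ) + 1)
      = ((r ^ (n + 1) / ((n : ℝ) + 1) : ℝ) : ℂ) * Complex.exp (((((n : ℝ) + 1) * t : ℝ) : ℂ) * Complex.I) := by
    rw [mul_pow, ← Complex.exp_nat_mul]
    push_cast
    rw [show ((n : ℂ) + 1) * (Complex.I * t) = ((n : ℂ) + 1) * t * Complex.I by ring]
    ring
  rw [this, Complex.re_ofReal_mul, Complex.exp_ofReal_mul_I_re]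

lemma aux_integral_r (r a : ℝ) (h0 : 0 ≤ r) (h1 : r < 1) :
    (∫ t in (0 : ℝ)..a, auxG r t)
      = -∑' n : ℕ, r ^ (n + 1) * (1 / ((n : ℝ) + 1) ^ 2 * Real.sin (((n : ℝ) + 1) * a)) := by
  have hs : HasSum (fun n : ℕ => ∫ t in (0 : ℝ)..a,
      -(r ^ (n + 1) / ((n : ℝ) + 1) * Real.cos (((n : ℝ) + 1) * t))) (∫ t in (0 : ℝ)..a, auxG r t) := by
    refine intervalIntegral.hasSum_integral_of_dominated_convergence (fun n _ => r ^ (n + 1)) ?_ ?_ ?_ ?_ ?_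
    · intro n
      exact Continuous.aestronglyMeasurable (by fun_prop)
    · intro n
      refine Eventually.of_forall fun t _ => ?_
      rw [norm_neg, norm_mul, Real.norm_eq_abs, Real.norm_eq_abs, abs_of_nonneg (by positivity)]
      have h2 : r ^ (n + 1) / ((n : ℝ) + 1) ≤ r ^ (n + 1) :=
        div_le_self (by positivity) (by linarith [(Nat.cast_nonneg n : (0 : ℝ) ≤ n)])
      calc _ ≤ r ^ (n + 1) / ((n : ℝ) + 1) * 1 := by
            gcongr
            exact Real.abs_cos_le_one _
        _ ≤ _ := by linarith
    · refine Eventually.of_forall fun t _ => ?_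
      exact (summable_nat_add_iff 1).2 (summable_geometric_of_lt_one h0 h1)
    · exact intervalIntegrable_const
    · exact Eventually.of_forall fun t _ => aux_hasSum r t h0 h1
  rw [← hs.tsum_eq, ← tsum_neg]
  refine tsum_congr fun n => ?_
  have hn : ((n : ℝ) + 1) ≠ 0 := by positivity
  rw [intervalIntegral.integral_neg, intervalIntegral.integral_const_mul,
    intervalIntegral.integral_comp_mul_left (fun t => Real.cos t) hn, integral_cos]
  simp only [mul_zero, Real.sin_zero, sub_zero, smul_eq_mul]
  field_simp

noncomputable def auxg (t : ℝ) : ℝ := Real.log (2 * Real.sin (t / 2))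

lemma auxG_one (t : ℝ) : auxG 1 t = auxg t := by
  unfold auxG auxg
  rw [← norm_neg]
  have := Complex.norm_exp_I_mul_ofReal_sub_one t
  simp only [Complex.ofReal_one, one_mul, neg_sub]
  rw [this, Real.norm_eq_abs, Real.log_abs]

lemma auxg_integrable (a b : ℝ) : IntervalIntegrable auxg volume a b := by
  have : AnalyticOnNhd ℝ (fun t : ℝ => 2 * Real.sin (t / 2)) (Set.uIcc a b) := by
    intro t _
    fun_prop
  exact this.meromorphicOn.intervalIntegrable_log

lemma aux_lower (r t : ℝ) : |Real.sin t| ≤ ‖(1 : ℂ) - r * Complex.exp (Complex.I * t)‖ := by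
  rw [Complex.norm_def]
  refine Real.abs_le_sqrt ?_
  rw [mul_comm Complex.I, Complex.normSq_apply]
  simp only [Complex.sub_re, Complex.sub_im, Complex.re_ofReal_mul, Complex.im_ofReal_mul,
    Complex.exp_ofReal_mul_I_re, Complex.exp_ofReal_mul_I_im, Complex.one_re, Complex.one_im]
  nlinarith [sq_nonneg (r - Real.cos t), Real.sin_sq_add_cos_sq t]

lemma aux_integral (a : ℝ) : (∫ t in (0 : ℝ)..a, auxg t) = -auxCl a := by
  have hev : ∀ᶠ r : ℝ in 𝓝[<] 1, 0 ≤ r ∧ r < 1 := by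
    filter_upwards [Ioo_mem_nhdsLT (show (0 : ℝ) < 1 by norm_num)] with r hr
    exact ⟨hr.1.le, hr.2⟩
  have hnhds : Tendsto (fun r : ℝ => r) (𝓝[<] 1) (𝓝 1) := tendsto_id.mono_left nhdsWithin_le_nhds
  have hL : Tendsto (fun r : ℝ => ∫ t in (0 : ℝ)..a, auxG r t) (𝓝[<] 1)
      (𝓝 (∫ t in (0 : ℝ)..a, auxg t)) := by
    have hae : ∀ᵐ t : ℝ, Real.sin t ≠ 0 := by simpa using aux_ae_sin 1 0 one_ne_zero
    refine intervalIntegral.tendsto_integral_filter_of_dominated_convergence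
      (fun t => Real.log 2 + |Real.log (Real.sin t)|) ?_ ?_ ?_ ?_
    · refine Eventually.of_forall fun r => Measurable.aestronglyMeasurable ?_
      unfold auxG
      exact Real.measurable_log.comp (Continuous.measurable (by fun_prop))
    · filter_upwards [hev] with r hr
      filter_upwards [hae] with t ht _
      have h1 := aux_lower r t
      have hp : 0 < |Real.sin t| := abs_pos.2 ht
      have h2 : ‖(1 : ℂ) - r * Complex.exp (Complex.I * t)‖ ≤ 2 := by
        refine (norm_sub_le _ _).trans ?_
        rw [aux_norm, abs_of_nonneg hr.1, norm_one]
        linarith [hr.2]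
      have h3 := Real.log_le_log hp h1
      have h4 := Real.log_le_log (hp.trans_le h1) h2
      rw [Real.log_abs] at h3
      have h5 : 0 ≤ Real.log 2 := Real.log_nonneg (by norm_num)
      have h6 := neg_abs_le (Real.log (Real.sin t))
      have h7 := abs_nonneg (Real.log (Real.sin t))
      rw [Real.norm_eq_abs, abs_le]
      unfold auxG
      constructor <;> linarith
    · exact intervalIntegrable_const.add intervalIntegrable_log_sin.abs
    · filter_upwards [hae] with t ht _
      rw [← auxG_one]
      unfold auxG
      have hne : ‖(1 : ℂ) - (1 : ℝ) * Complex.exp (Complex.I * t)‖ ≠ 0 :=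
        ((abs_pos.2 ht).trans_le (aux_lower 1 t)).ne'
      refine Tendsto.log ?_ hne
      have : Continuous (fun r : ℝ => ‖(1 : ℂ) - r * Complex.exp (Complex.I * t)‖) := by fun_prop
      exact (this.tendsto 1).mono_left nhdsWithin_le_nhds
  have hR : Tendsto (fun r : ℝ => -∑' n : ℕ, r ^ (n + 1) *
      (1 / ((n : ℝ) + 1) ^ 2 * Real.sin (((n : ℝ) + 1) * a))) (𝓝[<] 1) (𝓝 (-auxCl a)) := by
    refine Tendsto.neg ?_
    refine tendsto_tsum_of_dominated_convergence (bound := fun n : ℕ => 1 / ((n : ℝ) + 1) ^ 2)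
      aux_summable ?_ ?_
    · intro n
      have := (hnhds.pow (n + 1)).mul_const (1 / ((n : ℝ) + 1) ^ 2 * Real.sin (((n : ℝ) + 1) * a))
      simpa using this
    · filter_upwards [hev] with r hr n
      rw [norm_mul, norm_mul, Real.norm_eq_abs, Real.norm_eq_abs, Real.norm_eq_abs,
        abs_of_nonneg (pow_nonneg hr.1 _), abs_of_nonneg (by positivity)]
      have h1 : r ^ (n + 1) ≤ 1 := pow_le_one₀ hr.1 hr.2.le
      have h2 := Real.abs_sin_le_one (((n : ℝ) + 1) * a)
      have h3 : 0 ≤ 1 / ((n : ℝ) + 1) ^ 2 := by positivity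
      calc _ ≤ 1 * (1 / ((n : ℝ) + 1) ^ 2 * 1) := by gcongr
        _ = _ := by ring
  refine tendsto_nhds_unique hL (hR.congr' ?_)
  filter_upwards [hev] with r hr
  exact (aux_integral_r r a hr.1 hr.2).symm

/-- Change of variables for the log-sine quotient. -/
lemma aux_J (c x : ℝ) :
    (∫ φ in (0 : ℝ)..x, (Real.log (Real.sin (π * φ + c / 2) / Real.sin (c / 2 - π * φ))))
      = 1 / (2 * π) * (2 * auxCl c - auxCl (c + 2 * π * x) - auxCl (c - 2 * π * x)) := by
  have hpi : (2 * π : ℝ) ≠ 0 := by positivity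
  have hcongr : (∫ φ in (0 : ℝ)..x, (Real.log (Real.sin (π * φ + c / 2) / Real.sin (c / 2 - π * φ))))
      = ∫ φ in (0 : ℝ)..x, (auxg (2 * π * φ + c) - auxg (c - 2 * π * φ)) := by
    refine intervalIntegral.integral_congr_ae ?_
    filter_upwards [aux_ae_sin π (c / 2) Real.pi_ne_zero,
      aux_ae_sin (-π) (c / 2) (neg_ne_zero.2 Real.pi_ne_zero)] with φ h1 h2 _
    have h2' : Real.sin (c / 2 - π * φ) ≠ 0 := by
      rwa [show c / 2 - π * φ = -π * φ + c / 2 by ring]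
    unfold auxg
    rw [show (2 * π * φ + c) / 2 = π * φ + c / 2 by ring,
      show (c - 2 * π * φ) / 2 = c / 2 - π * φ by ring, Real.log_div h1 h2',
      Real.log_mul two_ne_zero h1, Real.log_mul two_ne_zero h2']
    ring
  have hm : ∀ u w : ℝ, (∫ t in u..w, auxg t) = auxCl u - auxCl w := by
    intro u w
    rw [← intervalIntegral.integral_interval_sub_left (auxg_integrable 0 w) (auxg_integrable 0 u),
      aux_integral, aux_integral]
    ring
  have han : ∀ p q : ℝ, IntervalIntegrable (fun φ => auxg (p * φ + q)) volume 0 x := by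
    intro p q
    have : AnalyticOnNhd ℝ (fun t : ℝ => 2 * Real.sin ((p * t + q) / 2)) (Set.uIcc 0 x) := by
      intro t _
      fun_prop
    exact this.meromorphicOn.intervalIntegrable_log
  have hi2 : IntervalIntegrable (fun φ => auxg (c - 2 * π * φ)) volume 0 x := by
    have := han (-(2 * π)) c
    have e : (fun φ => auxg (c - 2 * π * φ)) = fun φ => auxg (-(2 * π) * φ + c) := by
      funext t
      congr 1
      ring
    rw [e]
    exact this
  rw [hcongr, intervalIntegral.integral_sub (han _ _) hi2,
    intervalIntegral.integral_comp_mul_add _ hpi, intervalIntegral.integral_comp_sub_mul _ hpi,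
    hm, hm, smul_eq_mul, smul_eq_mul, mul_zero, zero_add, sub_zero, add_comm (2 * π * x) c]
  ring

lemma auxCl_add_sub (c y : ℝ) : auxCl (c + y) + auxCl (c - y)
    = 2 * ∑' n : ℕ, 1 / ((n : ℝ) + 1) ^ 2 * (Real.sin (((n : ℝ) + 1) * c) * Real.cos (((n : ℝ) + 1) * y)) := by
  unfold auxCl
  rw [← (aux_summable_mul _ fun n => Real.abs_sin_le_one _).tsum_add
    (aux_summable_mul _ fun n => Real.abs_sin_le_one _), ← tsum_mul_left]
  refine tsum_congr fun n => ?_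
  rw [mul_add, mul_sub, Real.sin_add, Real.sin_sub]
  ring

lemma aux_sin_shift (n : ℕ) (a : ℝ) :
    Real.sin (((n : ℝ) + 1) * (a + π)) = -((-1) ^ n * Real.sin (((n : ℝ) + 1) * a)) := by
  have := Real.sin_add_nat_mul_pi (((n : ℝ) + 1) * a) (n + 1)
  push_cast at this
  rw [mul_add, this, pow_succ]
  ring

lemma aux_odd (f : ℕ → ℝ) (hf : Summable f) (h0 : ∀ k, f (2 * k) = 0) :
    ∑' n, f n = ∑' k, f (2 * k + 1) := by
  have h1 : Summable fun k => f (2 * k) :=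
    hf.comp_injective (i := fun k => 2 * k) (fun a b h => by simp only at h; omega)
  have h2 : Summable fun k => f (2 * k + 1) :=
    hf.comp_injective (i := fun k => 2 * k + 1) (fun a b h => by simp only at h; omega)
  rw [← tsum_even_add_odd h1 h2, tsum_congr h0, tsum_zero, zero_add]

lemma auxCl_two (a : ℝ) : auxCl (2 * a) = 2 * auxCl a + 2 * auxCl (a + π) := by
  have hS := aux_summable_mul (fun n => Real.sin (((n : ℝ) + 1) * a)) fun n => Real.abs_sin_le_one _
  have hS' := aux_summable_mul (fun n => Real.sin (((n : ℝ) + 1) * (a + π)))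
    fun n => Real.abs_sin_le_one _
  have h := (hS.mul_left 2).tsum_add (hS'.mul_left 2)
  rw [tsum_mul_left, tsum_mul_left] at h
  unfold auxCl
  rw [← h, aux_odd _ ((hS.mul_left 2).add (hS'.mul_left 2))]
  · refine tsum_congr fun k => ?_
    rw [aux_sin_shift, show (-1 : ℝ) ^ (2 * k + 1) = -1 by rw [pow_succ, pow_mul]; norm_num]
    push_cast
    rw [show ((2 * (k : ℝ) + 1) + 1) * a = ((k : ℝ) + 1) * (2 * a) by ring,
      show (2 * (k : ℝ) + 1) + 1 = 2 * ((k : ℝ) + 1) by ring]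
    have : ((k : ℝ) + 1) ≠ 0 := by positivity
    generalize Real.sin (((k : ℝ) + 1) * (2 * a)) = S
    norm_num
    field_simp
    ring
  · intro k
    rw [aux_sin_shift, pow_mul]
    norm_num

lemma auxCl_const : auxCl (π / 3 + π) = -(2 / 3) * auxCl (π / 3) := by
  have h := auxCl_two (π / 3)
  have h2 : auxCl (2 * (π / 3)) = -auxCl (π / 3 + π) := by
    unfold auxCl
    rw [← tsum_neg]
    refine tsum_congr fun n => ?_
    have := Real.sin_nat_mul_two_pi_sub (((n : ℝ) + 1) * (π / 3 + π)) (n + 1)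
    push_cast at this
    rw [← mul_neg, ← this]
    congr 2
    ring
  linarith

lemma aux_C (c x : ℝ) :
    (∫ φ in (0 : ℝ)..x, (Real.log (Real.sin (π * φ + c / 2) / Real.sin (c / 2 - π * φ))))
      = 1 / π * (auxCl c - ∑' n : ℕ, 1 / ((n : ℝ) + 1) ^ 2 *
        (Real.sin (((n : ℝ) + 1) * c) * Real.cos (((n : ℝ) + 1) * (2 * π * x)))) := by
  rw [aux_J]
  have := auxCl_add_sub c (2 * π * x)
  rw [show 2 * auxCl c - auxCl (c + 2 * π * x) - auxCl (c - 2 * π * x) =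
    2 * auxCl c - (auxCl (c + 2 * π * x) + auxCl (c - 2 * π * x)) by ring, this]
  generalize (∑' n : ℕ, 1 / ((n : ℝ) + 1) ^ 2 *
        (Real.sin (((n : ℝ) + 1) * c) * Real.cos (((n : ℝ) + 1) * (2 * π * x)))) = S
  field_simp

lemma aux_sinint (y : ℝ) : (∫ φ in (0 : ℝ)..(y / 6),
      Real.log (Real.sin (π * (φ + 1 / 6)) / Real.sin (π * (1 / 6 - φ))))
    = 1 / π * (auxCl (π / 3) - ∑' n : ℕ, (1 : ℝ) / ((n : ℝ) + 1) ^ 2 *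
        Real.sin (((n : ℝ) + 1) * π / 3) * Real.cos (y * ((n : ℝ) + 1) * π / 3)) := by
  have h := aux_C (π / 3) (y / 6)
  have e1 : ∀ φ : ℝ, π * φ + π / 3 / 2 = π * (φ + 1 / 6) := fun φ => by ring
  have e2 : ∀ φ : ℝ, π / 3 / 2 - π * φ = π * (1 / 6 - φ) := fun φ => by ring
  simp only [e1, e2] at h
  rw [h]
  congr 2
  refine tsum_congr fun n => ?_
  rw [show ((n : ℝ) + 1) * (π / 3) = ((n : ℝ) + 1) * π / 3 by ring,
    show ((n : ℝ) + 1) * (2 * π * (y / 6)) = y * ((n : ℝ) + 1) * π / 3 by ring]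
  ring

lemma aux_cosint (y : ℝ) : (∫ φ in (0 : ℝ)..(y / 3),
      Real.log (Real.cos (π * (φ + 1 / 6)) / Real.cos (π * (1 / 6 - φ))))
    = 1 / π * (-(2 / 3) * auxCl (π / 3) + ∑' n : ℕ, (-1 : ℝ) ^ n / ((n : ℝ) + 1) ^ 2 *
        Real.sin (((n : ℝ) + 1) * π / 3) * Real.cos (2 * y * ((n : ℝ) + 1) * π / 3)) := by
  have h := aux_C (π / 3 + π) (y / 3)
  have e1 : ∀ φ : ℝ, Real.sin (π * φ + (π / 3 + π) / 2) = Real.cos (π * (φ + 1 / 6)) := fun φ => by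
    rw [← Real.sin_add_pi_div_two]; congr 1; ring
  have e2 : ∀ φ : ℝ, Real.sin ((π / 3 + π) / 2 - π * φ) = Real.cos (π * (1 / 6 - φ)) := fun φ => by
    rw [← Real.sin_add_pi_div_two]; congr 1; ring
  simp only [e1, e2] at h
  rw [h, auxCl_const, sub_eq_add_neg, ← tsum_neg]
  congr 2
  refine tsum_congr fun n => ?_
  rw [aux_sin_shift, show ((n : ℝ) + 1) * (π / 3) = ((n : ℝ) + 1) * π / 3 by ring,
    show ((n : ℝ) + 1) * (2 * π * (y / 3)) = 2 * y * ((n : ℝ) + 1) * π / 3 by ring]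
  ring

/-- The Fourier-series representation of the rate function `I(s,v)` on `Λ̄₂`
(series reindexed over `n : ℕ` starting from `0`). -/
theorem rateI_fourier_representation (s v : ℝ) (hsv : (s, v) ∈ LambdaBar2) :
    rateI s v
      = 6 / π * (∑' n : ℕ, (-1 : ℝ) ^ n / ((n : ℝ) + 1) ^ 2 * Real.sin (((n : ℝ) + 1) * π / 3) *
            Real.cos (2 * (1 - s) * ((n : ℝ) + 1) * π / 3)) +
        5 / π * (∑' n : ℕ, (1 : ℝ) / ((n : ℝ) + 1) ^ 2 * Real.sin (((n : ℝ) + 1) * π / 3)) -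
        6 / π * (∑' n : ℕ, (1 : ℝ) / ((n : ℝ) + 1) ^ 2 * Real.sin (((n : ℝ) + 1) * π / 3) *
            Real.cos ((1 - s + v) * ((n : ℝ) + 1) * π / 3)) -
        3 / π * (∑' n : ℕ, (1 : ℝ) / ((n : ℝ) + 1) ^ 2 * Real.sin (((n : ℝ) + 1) * π / 3) *
            Real.cos ((1 - s - v) * ((n : ℝ) + 1) * π / 3)) := by
  unfold rateI
  rw [aux_sinint, aux_sinint, aux_cosint]
  have hcl : (∑' n : ℕ, (1 : ℝ) / ((n : ℝ) + 1) ^ 2 * Real.sin (((n : ℝ) + 1) * π / 3))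
      = auxCl (π / 3) := by
    unfold auxCl
    refine tsum_congr fun n => ?_
    congr 2
    ring
  rw [hcl]
  ring
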